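/- arXiv:1511.02697 — 5 statements merged into one kernel-verified Lean document; each statement's English description precedes it below -/
import Mathlib

section
/- Let A be a C*-algebra, B ⊆ A a masa, and α a *-automorphism of A. Then for every x ∈ F_{B,α}, the element x*x belongs to B and the element xx* belongs to α(B) = {α(b) : b ∈ B}. -/
/-- `F_{B,α} = {x ∈ A : x b = α(b) x for all b ∈ B}`. -/
def Fset {A : Type*} [Mul A] (B : Set A) (α : A → A) : Set A :=
  {x | ∀ b ∈ B, x * b = α b * x}

/-- Let `A` be a C*-algebra, `B ⊆ A` a masa and `α` a *-automorphism of `A`.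
Then for every `x ∈ F_{B,α}`, `x*x ∈ B` and `xx* ∈ α(B)`. -/
theorem stmt1 {A : Type*} [NonUnitalNormedRing A] [StarRing A] [CStarRing A]
    [NormedSpace ℂ A] [IsScalarTower ℂ A A] [SMulCommClass ℂ A A]
    [CompleteSpace A] [StarModule ℂ A]
    (B : NonUnitalStarSubalgebra ℂ A)
    (hBcomm : ∀ b ∈ B, ∀ c ∈ B, b * c = c * b)
    (hBmax : ∀ a : A, (∀ b ∈ B, a * b = b * a) → a ∈ B)
    (α : A ≃⋆ₐ[ℂ] A)
    (x : A) (hx : x ∈ Fset (B : Set A) ⇑α) :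
    star x * x ∈ B ∧ x * star x ∈ ⇑α '' (B : Set A) := by
  -- Adjoint of the intertwining relation at `star b`.
  have hs : ∀ b ∈ B, b * star x = star x * α b := by
    intro b hb
    have h := congrArg star (hx (star b) (star_mem hb))
    simpa [map_star] using h
  refine ⟨hBmax _ fun b hb => ?_, α.symm (x * star x), hBmax _ fun b hb => ?_, by simp⟩
  · rw [mul_assoc, hx b hb, ← mul_assoc, ← hs b hb, mul_assoc]
  · apply EquivLike.injective α
    rw [map_mul α _ b, map_mul α b, α.apply_symm_apply, mul_assoc, ← hs b hb, ← mul_assoc, hx b hb,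
      mul_assoc]
end

section
/- Let A be a unital C*-algebra, B ⊆ A a masa, and α a *-automorphism of A. Let x ∈ F_{B,α}, so that x*x ∈ B, and let f ∈ C(Spec(B), ℂ) denote the Gelfand transform of x*x (a nonnegative function). Then for every subset V of the open support {t ∈ Spec(B) : f(t) ≠ 0} that is clopen in Spec(B), there exists a partial isometry v ∈ F_{B,α} such that v*v ∈ B and the Gelfand transform of v*v equals the characteristic function of V. -/
open WeakDual ComplexOrder in
/-- In a commutative C*-algebra, an element `h` that is positive on a clopen set `V` of characters
can be normalised there: some `b` conjugates `h` to the projection onto `V`, and `b` is itself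
supported on `V` (the last equation). -/
theorem exists_normalizer {D : Type*} [CommCStarAlgebra D] (h : D)
    (V : Set (characterSpace ℂ D)) (hV : IsClopen V)
    (hpos : ∀ φ ∈ V, 0 < φ h) :
    ∃ b : D, (∀ φ : characterSpace ℂ D,
        φ (star b * h * b) = V.indicator (fun _ => (1 : ℂ)) φ) ∧
      b * (star b * h * b) = b := by
  classical
  have hre : ∀ φ ∈ V, 0 < (φ h).re ∧ (((φ h).re : ℝ) : ℂ) = φ h := fun φ hφ => by
    obtain ⟨h1, h2⟩ := Complex.lt_def.mp (hpos φ hφ)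
    exact ⟨by simpa using h1, Complex.ext (by simp) (by simpa using h2)⟩
  have hcont : Continuous (fun φ : characterSpace ℂ D => φ h) :=
    (gelfandTransform ℂ D h).continuous
  let g : C(characterSpace ℂ D, ℂ) :=
    ⟨V.piecewise (fun φ => (((Real.sqrt (φ h).re)⁻¹ : ℝ) : ℂ)) (fun _ => 0), by
      refine continuous_piecewise (by simp [hV.frontier_eq]) ?_ continuousOn_const
      rw [hV.isClosed.closure_eq]
      refine Complex.continuous_ofReal.comp_continuousOn (ContinuousOn.inv₀ ?_ ?_)
      · exact (Real.continuous_sqrt.comp (Complex.continuous_re.comp hcont)).continuousOn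
      · exact fun φ hφ => (Real.sqrt_pos.mpr (hre φ hφ).1).ne'⟩
  have hg_mem : ∀ φ ∈ V, g φ = (((Real.sqrt (φ h).re)⁻¹ : ℝ) : ℂ) := fun φ hφ => by
    simp only [g, ContinuousMap.coe_mk, Set.piecewise_eq_of_mem _ _ _ hφ]
  have hg_off : ∀ φ ∉ V, g φ = 0 := fun φ hφ => by
    simp only [g, ContinuousMap.coe_mk, Set.piecewise_eq_of_notMem _ _ _ hφ]
  obtain ⟨b, hb⟩ := (gelfandStarTransform D).surjective g
  have hφb : ∀ φ : characterSpace ℂ D, φ b = g φ := fun φ => by rw [← hb]; rfl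
  have key : ∀ φ : characterSpace ℂ D,
      φ (star b * h * b) = V.indicator (fun _ => (1 : ℂ)) φ := by
    intro φ
    rw [map_mul, map_mul, map_star, hφb]
    by_cases hφ : φ ∈ V
    · obtain ⟨h1, h2⟩ := hre φ hφ
      rw [hg_mem φ hφ, Set.indicator_of_mem hφ, ← h2, Complex.ofReal_re, Complex.star_def,
        Complex.conj_ofReal, ← Complex.ofReal_mul, ← Complex.ofReal_mul, Complex.ofReal_eq_one]
      have h3 := (Real.sqrt_pos.mpr h1).ne'
      have h4 := Real.mul_self_sqrt h1.le
      field_simp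
      rw [sq, h4]
    · simp [hg_off φ hφ, hφ]
  refine ⟨b, key, (gelfandStarTransform D).injective (ContinuousMap.ext fun φ => ?_)⟩
  change φ (b * (star b * h * b)) = φ b
  rw [map_mul, key]
  by_cases hφ : φ ∈ V
  · simp [hφ]
  · simp [hφ, hφb, hg_off φ hφ]

/-- Let `A` be a unital C*-algebra, `B ⊆ A` a masa and `α` a
*-automorphism of `A`. Let `x ∈ F_{B,α}` (so `x*x ∈ B`) and let `f` be the Gelfand
transform of `x*x`, i.e. the function `φ ↦ φ(x*x)` on the character space of `B`.
Then for every subset `V` of the open support `{φ : f(φ) ≠ 0}` that is clopen in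
`Spec(B)`, there is a partial isometry `v ∈ F_{B,α}` with `v*v ∈ B` whose Gelfand
transform is the characteristic function of `V`. -/
theorem stmt4 {A : Type*} [NormedRing A] [StarRing A] [CStarRing A]
    [NormedAlgebra ℂ A] [CompleteSpace A] [StarModule ℂ A]
    (B : StarSubalgebra ℂ A)
    (hBcomm : ∀ b ∈ B, ∀ c ∈ B, b * c = c * b)
    (hBmax : ∀ a : A, (∀ b ∈ B, a * b = b * a) → a ∈ B)
    (α : A ≃⋆ₐ[ℂ] A)
    (x : A) (hx : x ∈ Fset (B : Set A) ⇑α) (hxx : star x * x ∈ B)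
    (V : Set (WeakDual.characterSpace ℂ B)) (hV : IsClopen V)
    (hVsupp : ∀ φ ∈ V, (φ : WeakDual.characterSpace ℂ B) (⟨star x * x, hxx⟩ : B) ≠ 0) :
    ∃ v ∈ Fset (B : Set A) ⇑α, v * star v * v = v ∧
      ∃ hvv : star v * v ∈ B,
        ∀ φ : WeakDual.characterSpace ℂ B,
          (φ : WeakDual.characterSpace ℂ B) (⟨star v * v, hvv⟩ : B)
            = V.indicator (fun _ => (1 : ℂ)) φ := by
  let _ : CStarAlgebra A := {}
  let _ : PartialOrder A := CStarAlgebra.spectralOrder A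
  have : StarOrderedRing A := CStarAlgebra.spectralOrderedRing A
  have hclosed : IsClosed (B : Set A) := by
    have : (B : Set A) = ⋂ b ∈ B, {a : A | a * b = b * a} := by
      ext a
      simp only [Set.mem_iInter, Set.mem_ofPred_eq]
      exact ⟨fun ha b hb => hBcomm a ha b hb, fun ha => hBmax a ha⟩
    rw [this]
    exact isClosed_biInter fun b _ =>
      isClosed_eq (continuous_id.mul continuous_const) (continuous_const.mul continuous_id)
  have : CompleteSpace B := hclosed.completeSpace_coe
  let _ : CommCStarAlgebra B :=
    { mul_comm := fun a b => Subtype.ext (hBcomm a a.2 b b.2) }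
  open ComplexOrder in
  have hpos : ∀ φ ∈ V, 0 < (φ : WeakDual.characterSpace ℂ B) (⟨star x * x, hxx⟩ : B) := by
    intro φ hφ
    refine lt_of_le_of_ne ?_ (hVsupp φ hφ).symm
    -- Character values lie in the spectrum, which by spectral permanence may be taken in `A`.
    have h1 : φ (⟨star x * x, hxx⟩ : B) ∈ spectrum ℂ (⟨star x * x, hxx⟩ : B) :=
      AlgHom.apply_mem_spectrum φ _
    rw [StarSubalgebra.spectrum_eq] at h1
    exact spectrum_nonneg_of_nonneg (star_mul_self_nonneg x) h1
  obtain ⟨b, hb1, hb2⟩ := exists_normalizer (⟨star x * x, hxx⟩ : B) V hV hpos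
  have hvv : star (x * (b : A)) * (x * b) =
      ((star b * (⟨star x * x, hxx⟩ : B) * b : B) : A) := by
    simp [mul_assoc]
  refine ⟨x * b, fun c hc => ?_, ?_, ?_, fun φ => ?_⟩
  · rw [mul_assoc, hBcomm b b.2 c hc, ← mul_assoc, hx c hc, mul_assoc]
  · rw [mul_assoc, hvv, mul_assoc, ← MulMemClass.coe_mul, hb2]
  · rw [hvv]
    exact SetLike.coe_mem _
  · rw [← hb1 φ]
    exact congrArg φ (Subtype.ext hvv)
end

section
/- Let A be a unital C*-algebra, B ⊆ A a masa whose spectrum Spec(B) is totally disconnected, and α a *-automorphism of A. If F_{B,α} ≠ {0}, then F_{B,α} contains a nonzero partial isometry. -/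
open WeakDual

/-- In a commutative C⋆-algebra with totally disconnected spectrum, a nonzero positive element `h`
has a local inverse square root `g`: the element `g⋆ h g` is the nonzero projection onto a clopen
set on which `h` does not vanish, and `g` is supported there. -/
theorem exists_local_inv_sqrt {C : Type*} [CommCStarAlgebra C]
    [TotallyDisconnectedSpace (characterSpace ℂ C)] (h : C) (h0 : h ≠ 0)
    (hsa : IsSelfAdjoint h) (hpos : ∀ r : ℝ, (r : ℂ) ∈ spectrum ℂ h → 0 ≤ r) :
    ∃ g : C, star g * h * g ≠ 0 ∧ g * (star g * h * g) = g := by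
  set e := gelfandStarTransform C with he
  set f : C(characterSpace ℂ C, ℂ) := e h with hf
  have f0 : f ≠ 0 := by
    intro H
    exact h0 (EquivLike.injective e (by rw [← hf, H, map_zero]))
  have hre : ∀ φ, ((f φ).re : ℂ) = f φ := by
    intro φ
    have h1 : star f = f := by rw [hf, ← map_star, hsa.star_eq]
    have h2 : star (f φ) = f φ := congrArg (fun k : C(characterSpace ℂ C, ℂ) => k φ) h1
    exact Complex.conj_eq_iff_re.mp h2
  have hnn : ∀ φ, 0 ≤ (f φ).re := by
    intro φ
    apply hpos
    rw [hre]
    exact AlgHom.apply_mem_spectrum φ h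
  obtain ⟨φ₀, hφ₀⟩ : ∃ φ, f φ ≠ 0 := by
    by_contra! H
    exact f0 (ContinuousMap.ext H)
  obtain ⟨K, hK, hφK, hKU⟩ := compact_exists_isClopen_in_isOpen
    (isOpen_ne.preimage f.continuous : IsOpen (f ⁻¹' {z | z ≠ 0})) hφ₀
  let k : characterSpace ℂ C → ℂ := fun φ => (((Real.sqrt (f φ).re)⁻¹ : ℝ) : ℂ)
  let g₀ : characterSpace ℂ C → ℂ := K.indicator k
  have hre0 : ∀ φ ∈ K, (f φ).re ≠ 0 := fun φ hφ H => hKU hφ (by rw [← hre, H]; simp)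
  have hg₀ : Continuous g₀ := by
    apply continuous_indicator (by simp [hK.frontier_eq])
    rw [hK.isClosed.closure_eq]
    refine Complex.continuous_ofReal.comp_continuousOn (ContinuousOn.inv₀ ?_ ?_)
    · exact (Real.continuous_sqrt.comp (Complex.continuous_re.comp f.continuous)).continuousOn
    · intro φ hφ
      exact (Real.sqrt_pos.2 (lt_of_le_of_ne (hnn φ) (hre0 φ hφ).symm)).ne'
  let G : C(characterSpace ℂ C, ℂ) := ⟨g₀, hg₀⟩
  have hG : ∀ φ ∈ K, star (G φ) * f φ * G φ = 1 := by
    intro φ hφ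
    have hs : Real.sqrt (f φ).re ≠ 0 :=
      (Real.sqrt_pos.2 (lt_of_le_of_ne (hnn φ) (hre0 φ hφ).symm)).ne'
    have h1 : G φ = (((Real.sqrt (f φ).re)⁻¹ : ℝ) : ℂ) := Set.indicator_of_mem hφ k
    rw [h1, ← hre φ]
    simp only [RCLike.star_def, Complex.conj_ofReal, Complex.ofReal_re]
    norm_cast
    nth_rewrite 2 [← Real.mul_self_sqrt (hnn φ)]
    field_simp
  have hG0 : ∀ φ, φ ∉ K → G φ = 0 := fun φ hφ => Set.indicator_of_notMem hφ k
  have heq : e (star (e.symm G) * h * e.symm G) = star G * f * G := by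
    simp [hf, map_star]
  refine ⟨e.symm G, ?_, ?_⟩
  · intro H
    rw [H, map_zero] at heq
    have h1 := congrArg (fun k : C(characterSpace ℂ C, ℂ) => k φ₀) heq
    have h2 := hG φ₀ hφK
    simp only [ContinuousMap.zero_apply, ContinuousMap.mul_apply, ContinuousMap.star_apply] at h1
    rw [h2] at h1
    exact zero_ne_one h1
  · apply EquivLike.injective e
    rw [map_mul, heq, StarAlgEquiv.apply_symm_apply]
    ext φ
    by_cases hφ : φ ∈ K
    · have h2 := hG φ hφ
      simp only [ContinuousMap.mul_apply, ContinuousMap.star_apply]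
      rw [h2, mul_one]
    · simp [hG0 φ hφ]

/-- Let `A` be a unital C*-algebra, `B ⊆ A` a masa whose spectrum
(character space) is totally disconnected, and `α` a *-automorphism of `A`.
If `F_{B,α} ≠ {0}`, then `F_{B,α}` contains a nonzero partial isometry. -/
theorem stmt5 {A : Type*} [NormedRing A] [StarRing A] [CStarRing A]
    [NormedAlgebra ℂ A] [CompleteSpace A] [StarModule ℂ A]
    (B : StarSubalgebra ℂ A)
    (hBcomm : ∀ b ∈ B, ∀ c ∈ B, b * c = c * b)
    (hBmax : ∀ a : A, (∀ b ∈ B, a * b = b * a) → a ∈ B)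
    (htd : TotallyDisconnectedSpace (WeakDual.characterSpace ℂ B))
    (α : A ≃⋆ₐ[ℂ] A)
    (hF : ∃ x ∈ Fset (B : Set A) ⇑α, x ≠ 0) :
    ∃ v ∈ Fset (B : Set A) ⇑α, v ≠ 0 ∧ v * star v * v = v := by
  obtain ⟨x, hx, hx0⟩ := hF
  have hx' : ∀ b ∈ B, x * b = α b * x := hx
  letI : CStarAlgebra A := { }
  have hclosed : IsClosed (B : Set A) := by
    have : (B : Set A) = ⋂ b ∈ B, {a | a * b = b * a} := by
      ext a
      simp only [Set.mem_iInter, Set.mem_setOf_eq]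
      exact ⟨fun ha b hb => hBcomm a ha b hb, hBmax a⟩
    rw [this]
    exact isClosed_biInter fun b _ =>
      isClosed_eq (continuous_id.mul continuous_const) (continuous_const.mul continuous_id)
  letI : CommCStarAlgebra B :=
    { StarSubalgebra.cstarAlgebra B with
      mul_comm := fun a b => Subtype.ext (hBcomm a a.2 b b.2) }
  have hxx : star x * x ∈ B := by
    apply hBmax
    intro b hb
    have h1 : star x * α b = b * star x := by
      have := congrArg star (hx' (star b) (star_mem hb))
      simpa [star_mul, map_star] using this.symm
    rw [mul_assoc, hx' b hb, ← mul_assoc, h1, mul_assoc]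
  let h : B := ⟨star x * x, hxx⟩
  obtain ⟨g, hg0, hg⟩ := exists_local_inv_sqrt h
    (fun H => hx0 (CStarRing.star_mul_self_eq_zero_iff x |>.1 (congrArg Subtype.val H)))
    (Subtype.ext (IsSelfAdjoint.star_mul_self x))
    (fun r hr => by
      have hr' : (r : ℂ) ∈ spectrum ℂ (star x * x) := by
        rwa [← StarSubalgebra.spectrum_eq (hS := hclosed) (a := h)]
      exact spectrum_star_mul_self_nonneg r (spectrum.algebraMap_mem_iff ℂ |>.1 hr'))
  have hp : star (x * (g : A)) * (x * g) = ((star g * h * g : B) : A) := by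
    change _ = star (g : A) * (star x * x) * g
    simp only [star_mul, mul_assoc]
  refine ⟨x * g, fun b hb => ?_, fun H => ?_, ?_⟩
  · rw [mul_assoc, hBcomm g g.2 b hb, ← mul_assoc, hx' b hb, mul_assoc]
  · rw [H, mul_zero] at hp
    exact hg0 (Subtype.ext hp.symm)
  · rw [mul_assoc, hp, mul_assoc]
    exact congrArg (x * ·) (congrArg Subtype.val hg)
end

section
/- Let A be a C*-algebra, B ⊆ A a masa, and α a *-automorphism of A with α^n = id_A for some n ≥ 1. For every partial isometry v ∈ F_{B,α}, the element c := α^{n-1}(v)·α^{n-2}(v)⋯α(v)·v (the product with α^{n-1}(v) leftmost) belongs to B and satisfies c·c* = c*·c = v*v. -/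
/-- The product `α^m(v) ⋯ α(v) v` of `m + 1` factors. -/
def iterProd {A : Type*} [Mul A] (α : A → A) (v : A) : ℕ → A
  | 0 => v
  | m + 1 => α^[m + 1] v * iterProd α v m

lemma foldr_eq_iterProd {A : Type*} [Mul A] (α : A → A) (v : A) (m : ℕ) :
    ((List.range m).map (fun k => α^[m - k] v)).foldr (· * ·) v = iterProd α v m := by
  induction m with
  | zero => rfl
  | succ m ih =>
    rw [List.range_succ_eq_map, List.map_cons, List.foldr_cons, List.map_map, iterProd, ← ih]
    simp [Function.comp_def]

section

variable {A : Type*} [NonUnitalRing A] [StarRing A] [Module ℂ A]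

lemma iterate_map_star (α : A ≃⋆ₐ[ℂ] A) (m : ℕ) (a : A) :
    (⇑α)^[m] (star a) = star ((⇑α)^[m] a) := by
  induction m generalizing a with
  | zero => rfl
  | succ m ih => simp only [Function.iterate_succ_apply, map_star, ih]

lemma iterProd_mul (α : A ≃⋆ₐ[ℂ] A) {v b : A} (h : v * b = α b * v) (m : ℕ) :
    iterProd α v m * b = (⇑α)^[m + 1] b * iterProd α v m := by
  induction m with
  | zero => exact h
  | succ m ih =>
    rw [iterProd, mul_assoc, ih, ← mul_assoc, ← iterate_map_mul, h, iterate_map_mul,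
      ← Function.iterate_succ_apply, mul_assoc]

lemma star_mul_map {B : NonUnitalStarSubalgebra ℂ A} {α : A ≃⋆ₐ[ℂ] A} {v : A}
    (hv : v ∈ Fset (B : Set A) ⇑α) {b : A} (hb : b ∈ B) : star v * α b = b * star v := by
  have h := congrArg star (hv (star b) (star_mem hb))
  simpa only [star_mul, star_star, map_star] using h.symm

lemma star_mul_self_mem_masa {B : NonUnitalStarSubalgebra ℂ A}
    (hBmax : ∀ a : A, (∀ b ∈ B, a * b = b * a) → a ∈ B) {α : A ≃⋆ₐ[ℂ] A} {v : A}
    (hv : v ∈ Fset (B : Set A) ⇑α) : star v * v ∈ B := by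
  refine hBmax _ fun b hb => ?_
  rw [mul_assoc, hv b hb, ← mul_assoc, star_mul_map hv hb, mul_assoc]

lemma star_iterProd_mul_self {B : NonUnitalStarSubalgebra ℂ A}
    (hBmax : ∀ a : A, (∀ b ∈ B, a * b = b * a) → a ∈ B) {α : A ≃⋆ₐ[ℂ] A} {v : A}
    (hv : v ∈ Fset (B : Set A) ⇑α) (hpi : v * star v * v = v) (m : ℕ) :
    star (iterProd α v m) * iterProd α v m = star v * v := by
  induction m with
  | zero => rfl
  | succ m ih =>
    have he := star_mul_self_mem_masa hBmax hv
    have hidem : star v * v * (star v * v) = star v * v := by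
      rw [mul_assoc, ← mul_assoc v, hpi]
    calc star (iterProd α v (m + 1)) * iterProd α v (m + 1)
        = star (iterProd α v m) * ((⇑α)^[m + 1] (star v * v) * iterProd α v m) := by
          rw [iterProd, star_mul, iterate_map_mul, iterate_map_star]
          simp only [mul_assoc]
      _ = star v * v := by
          rw [← iterProd_mul α (hv _ he), ← mul_assoc, ih, hidem]

end

/-- Let `A` be a C*-algebra, `B ⊆ A` a masa and `α` a *-automorphism
of `A` with `α^n = id` for some `n ≥ 1`. For every partial isometry `v ∈ F_{B,α}`, the
element `c := α^{n-1}(v)·α^{n-2}(v)⋯α(v)·v` (leftmost factor `α^{n-1}(v)`, encoded as a fold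
since `A` need not be unital) belongs to `B`
and satisfies `c c* = c* c = v* v`. -/
theorem stmt6 {A : Type*} [NonUnitalNormedRing A] [StarRing A] [CStarRing A]
    [NormedSpace ℂ A] [IsScalarTower ℂ A A] [SMulCommClass ℂ A A]
    [CompleteSpace A] [StarModule ℂ A]
    (B : NonUnitalStarSubalgebra ℂ A)
    (hBcomm : ∀ b ∈ B, ∀ c ∈ B, b * c = c * b)
    (hBmax : ∀ a : A, (∀ b ∈ B, a * b = b * a) → a ∈ B)
    (α : A ≃⋆ₐ[ℂ] A) (n : ℕ) (hn : 1 ≤ n) (hα : ∀ a : A, (⇑α)^[n] a = a)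
    (v : A) (hv : v ∈ Fset (B : Set A) ⇑α) (hpi : v * star v * v = v)
    (c : A) (hc : c = ((List.range (n - 1)).map (fun k => (⇑α)^[n - 1 - k] v)).foldr (· * ·) v) :
    c ∈ B ∧ c * star c = star v * v ∧ star c * c = star v * v := by
  obtain ⟨m, rfl⟩ : ∃ m, n = m + 1 := ⟨n - 1, by omega⟩
  simp only [Nat.add_sub_cancel] at hc
  rw [foldr_eq_iterProd] at hc
  have hcB : c ∈ B := hBmax c fun b hb => by
    rw [hc, iterProd_mul α (hv b hb), hα]
  have hcc : star c * c = star v * v := by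
    rw [hc, star_iterProd_mul_self hBmax hv hpi]
  exact ⟨hcB, (hBcomm c hcB _ (star_mem hcB)).trans hcc, hcc⟩
end

section
/- Let A be a unital C*-algebra and B ⊆ A a masa whose spectrum Spec(B) is totally disconnected. Assume that for every nonzero projection e ∈ B there exists an isometry s ∈ A (i.e., s*s = 1) such that sBs* ⊆ eBe. Let α be a *-automorphism of A with F_{B,α} ≠ {0}. Then there exists a unitary w ∈ A such that α(b) = w·b·w* for all b ∈ B. -/
open WeakDual in
/-- In a commutative C*-algebra with totally disconnected spectrum, a nonzero self-adjoint element
is invertible under some nonzero projection. -/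
theorem exists_proj_of_selfAdjoint {C : Type*} [CommCStarAlgebra C]
    [TotallyDisconnectedSpace (characterSpace ℂ C)] (k : C) (hk : star k = k) (hk0 : k ≠ 0) :
    ∃ g e : C, star g = g ∧ star e = e ∧ e * e = e ∧ e ≠ 0 ∧ g * k = e ∧ g * e = g := by
  set Φ := gelfandStarTransform C with hΦ
  have hK : star (Φ k) = Φ k := by rw [← map_star, hk]
  have hK0 : Φ k ≠ 0 := fun h => hk0 (by simpa using h)
  obtain ⟨p, hp⟩ : ∃ p, Φ k p ≠ 0 := by
    by_contra! h
    exact hK0 (ContinuousMap.ext h)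
  obtain ⟨U, hU, hpU, hUsub⟩ := compact_exists_isClopen_in_isOpen
    (isOpen_ne_fun (Φ k).continuous continuous_const : IsOpen {q | Φ k q ≠ 0}) hp
  set χ : C(characterSpace ℂ C, ℂ) := (LocallyConstant.charFn ℂ hU).toContinuousMap with hχ
  have hχ1 : ∀ q ∈ U, χ q = 1 := fun q hq => (LocallyConstant.charFn_eq_one ℂ q hU).2 hq
  have hχ0 : ∀ q ∉ U, χ q = 0 := fun q hq => (LocallyConstant.charFn_eq_zero ℂ q hU).2 hq
  -- The denominator is `Φ k` on `U` and `1` off `U`, so it vanishes nowhere.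
  have hne : ∀ q, Φ k q * χ q + (1 - χ q) ≠ 0 := by
    intro q
    by_cases hq : q ∈ U
    · simpa [hχ1 q hq] using hUsub hq
    · simp [hχ0 q hq]
  let G : C(characterSpace ℂ C, ℂ) :=
    ⟨fun q => χ q * (Φ k q * χ q + (1 - χ q))⁻¹,
      χ.continuous.mul (Continuous.inv₀ (by fun_prop) hne)⟩
  have hG : ∀ q, G q = χ q * (Φ k q * χ q + (1 - χ q))⁻¹ := fun _ => rfl
  have hKq : ∀ q, star (Φ k q) = Φ k q := fun q => DFunLike.congr_fun hK q
  refine ⟨Φ.symm G, Φ.symm χ, ?_, ?_, ?_, ?_, ?_, ?_⟩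
  · rw [← map_star]
    congr 1
    ext q
    by_cases hq : q ∈ U
    · have := hKq q
      simp only [RCLike.star_def] at this
      simp [hG, hχ1 q hq, this]
    · simp [hG, hχ0 q hq]
  · rw [← map_star]
    congr 1
    ext q
    by_cases hq : q ∈ U
    · simp [hχ1 q hq]
    · simp [hχ0 q hq]
  · rw [← map_mul]
    congr 1
    ext q
    by_cases hq : q ∈ U
    · simp [hχ1 q hq]
    · simp [hχ0 q hq]
  · intro h
    have h1 : χ = 0 := by simpa using h
    have := hχ1 p hpU
    simp [h1] at this
  · apply EquivLike.injective Φ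
    rw [map_mul, Φ.apply_symm_apply, Φ.apply_symm_apply]
    ext q
    by_cases hq : q ∈ U
    · simp [hG, hχ1 q hq, inv_mul_cancel₀ (hUsub hq : Φ k q ≠ 0)]
    · simp [hG, hχ0 q hq]
  · rw [← map_mul]
    congr 1
    ext q
    by_cases hq : q ∈ U
    · simp [hG, hχ1 q hq]
    · simp [hG, hχ0 q hq]

/-- The square root of `star x * x` commutes with everything `star x * x` commutes with, so it lies
in a subalgebra containing its own commutant as soon as `star x * x` commutes with it. -/
theorem exists_sqrt_mem {A : Type*} [CStarAlgebra A] (B : StarSubalgebra ℂ A)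
    (hBmax : ∀ a : A, (∀ b ∈ B, a * b = b * a) → a ∈ B) (x : A) (hx : x ≠ 0)
    (hcomm : ∀ b ∈ B, star x * x * b = b * (star x * x)) :
    ∃ k ∈ B, star k = k ∧ k ≠ 0 ∧ k * k = star x * x := by
  let : PartialOrder A := CStarAlgebra.spectralOrder A
  have : StarOrderedRing A := CStarAlgebra.spectralOrderedRing A
  have hpos : 0 ≤ star x * x := star_mul_self_nonneg x
  have hsq : CFC.sqrt (star x * x) * CFC.sqrt (star x * x) = star x * x :=
    CFC.sqrt_mul_sqrt_self _ hpos
  refine ⟨CFC.sqrt (star x * x), hBmax _ fun b hb => ?_, ?_, ?_, hsq⟩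
  · have h : Commute (star x * x) b := hcomm b hb
    exact (h.cfcₙ_nnreal NNReal.sqrt).eq
  · exact (IsSelfAdjoint.of_nonneg (CFC.sqrt_nonneg _)).star_eq
  · intro h
    rw [h, mul_zero] at hsq
    exact hx (CStarRing.star_mul_self_eq_zero_iff x |>.1 hsq.symm)

/-- `exists_proj_of_selfAdjoint` for a masa, viewed inside the ambient C*-algebra. -/
theorem exists_proj_mem {A : Type*} [CStarAlgebra A] (B : StarSubalgebra ℂ A)
    (hBcomm : ∀ b ∈ B, ∀ c ∈ B, b * c = c * b)
    (hBmax : ∀ a : A, (∀ b ∈ B, a * b = b * a) → a ∈ B)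
    (htd : TotallyDisconnectedSpace (WeakDual.characterSpace ℂ B))
    (k : A) (hkB : k ∈ B) (hk : star k = k) (hk0 : k ≠ 0) :
    ∃ g ∈ B, ∃ e ∈ B,
      star g = g ∧ star e = e ∧ e * e = e ∧ e ≠ 0 ∧ g * k = e ∧ g * e = g := by
  -- A masa is its own commutant, hence norm-closed.
  have hclosed : IsClosed (B : Set A) := by
    have : (B : Set A) = ⋂ b ∈ B, {a | a * b = b * a} := by
      ext a
      simp only [SetLike.mem_coe, Set.mem_iInter, Set.mem_ofPred_eq]
      exact ⟨fun ha b hb => hBcomm a ha b hb, hBmax a⟩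
    rw [this]
    exact isClosed_biInter fun b _ => isClosed_eq (by fun_prop) (by fun_prop)
  have : CompleteSpace B := hclosed.completeSpace_coe
  let : CommCStarAlgebra B :=
    { (inferInstance : NormedRing B), (inferInstance : StarRing B),
      (inferInstance : CompleteSpace B), (inferInstance : CStarRing B),
      (inferInstance : NormedAlgebra ℂ B), (inferInstance : StarModule ℂ B) with
      mul_comm := fun a b => Subtype.ext (hBcomm a a.2 b b.2) }
  have : TotallyDisconnectedSpace (WeakDual.characterSpace ℂ B) := htd
  obtain ⟨g, e, h1, h2, h3, h4, h5, h6⟩ := exists_proj_of_selfAdjoint (⟨k, hkB⟩ : B)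
    (Subtype.ext hk) (fun h => hk0 (congrArg Subtype.val h))
  exact ⟨g, g.2, e, e.2, congrArg Subtype.val h1, congrArg Subtype.val h2,
    congrArg Subtype.val h3, fun h => h4 (Subtype.ext h), congrArg Subtype.val h5,
    congrArg Subtype.val h6⟩

/-- Let `A` be a unital C*-algebra and `B ⊆ A` a masa with totally
disconnected spectrum. Assume that for every nonzero projection `e ∈ B` there is an
isometry `s ∈ A` with `s B s* ⊆ e B e`. If `α` is a *-automorphism of `A` with
`F_{B,α} ≠ {0}`, then there exists a unitary `w ∈ A` with `α(b) = w b w*` for all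
`b ∈ B`. -/
theorem stmt9 {A : Type*} [NormedRing A] [StarRing A] [CStarRing A]
    [NormedAlgebra ℂ A] [CompleteSpace A] [StarModule ℂ A]
    (B : StarSubalgebra ℂ A)
    (hBcomm : ∀ b ∈ B, ∀ c ∈ B, b * c = c * b)
    (hBmax : ∀ a : A, (∀ b ∈ B, a * b = b * a) → a ∈ B)
    (htd : TotallyDisconnectedSpace (WeakDual.characterSpace ℂ B))
    (hiso : ∀ e : A, e ∈ B → e ≠ 0 → star e = e → e * e = e →
      ∃ s : A, star s * s = 1 ∧ ∀ b ∈ B, ∃ c ∈ B, s * b * star s = e * c * e)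
    (α : A ≃⋆ₐ[ℂ] A)
    (hF : ∃ x ∈ Fset (B : Set A) ⇑α, x ≠ 0) :
    ∃ w : A, star w * w = 1 ∧ w * star w = 1 ∧
      ∀ b ∈ B, α b = w * b * star w := by
  let : CStarAlgebra A := {}
  obtain ⟨x, hxF, hx0⟩ := hF
  have hxb : ∀ b ∈ B, x * b = α b * x := hxF
  have hxs : ∀ b ∈ B, b * star x = star x * α b := by
    intro b hb
    have h := congrArg star (hxb (star b) (star_mem hb))
    simpa [map_star] using h
  obtain ⟨k, hkB, hks, hk0, hkk⟩ := exists_sqrt_mem B hBmax x hx0 (fun b hb => by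
    rw [mul_assoc, hxb b hb, ← mul_assoc, ← hxs b hb, mul_assoc])
  obtain ⟨g, hgB, e, heB, hgs, hes, hee, he0, hgk, hge⟩ :=
    exists_proj_mem B hBcomm hBmax htd k hkB hks hk0
  obtain ⟨s, hs, hsB⟩ := hiso e heB he0 hes hee
  obtain ⟨v, hv⟩ : ∃ v, v = x * g := ⟨_, rfl⟩
  have hvb : ∀ b ∈ B, v * b = α b * v := by
    intro b hb
    rw [hv, mul_assoc, hBcomm g hgB b hb, ← mul_assoc, hxb b hb, mul_assoc]
  have hvs : ∀ b ∈ B, b * star v = star v * α b := by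
    intro b hb
    have h := congrArg star (hvb (star b) (star_mem hb))
    simpa [map_star] using h
  have hvv : star v * v = e := by
    calc star v * v = g * (star x * x) * g := by rw [hv, star_mul, hgs]; noncomm_ring
      _ = (g * k) * (k * g) := by rw [← hkk]; noncomm_ring
      _ = e := by rw [hBcomm k hkB g hgB, hgk, hee]
  have hve : v * e = v := by rw [hv, mul_assoc, hge]
  have hvv' : v * star v = α e := by
    obtain ⟨f, hf⟩ : ∃ f, f = α.symm (v * star v) := ⟨_, rfl⟩
    have hαf : α f = v * star v := by rw [hf, α.apply_symm_apply]
    have hfB : f ∈ B := hBmax f fun b hb => by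
      apply EquivLike.injective α
      rw [map_mul, map_mul, hαf, mul_assoc, ← hvs b hb, ← mul_assoc, hvb b hb, mul_assoc]
    have h1 : e * f = e := by
      rw [← hvv, mul_assoc, hvb f hfB, hαf, mul_assoc, hvv, hve, hvv]
    have h2 : e * f = f := by
      apply EquivLike.injective α
      rw [map_mul, hαf, ← mul_assoc, ← hvb e heB, hve]
    rw [← hαf, ← h2, h1]
  have hconj : ∀ b ∈ B, s * b * star s ∈ B := by
    intro b hb
    obtain ⟨c, hc, h⟩ := hsB b hb
    rw [h]
    exact mul_mem (mul_mem heB hc) heB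
  have hes' : e * s = s := by
    obtain ⟨c, -, h⟩ := hsB 1 (one_mem B)
    rw [mul_one] at h
    have hs' : s = e * c * e * s := by rw [← h, mul_assoc, hs, mul_one]
    calc e * s = (e * e) * c * e * s := by
          conv_lhs => rw [hs']
          noncomm_ring
      _ = s := by rw [hee, ← hs']
  have hp : s * star s ∈ B := by simpa using hconj 1 (one_mem B)
  have hse : star s * e * s = 1 := by rw [mul_assoc, hes', hs]
  have hα1 : star (α s) * α s = 1 := by rw [← map_star, ← map_mul, hs, map_one]
  have hw2 : (star (α s) * v * s) * star (star (α s) * v * s) = 1 := by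
    calc _ = star (α s) * (v * (s * star s)) * star v * α s := by
          simp only [star_mul, star_star]; noncomm_ring
      _ = (star (α s) * α s) * star (α s) * (v * star v) * α s := by
          rw [hvb _ hp, map_mul, map_star]; noncomm_ring
      _ = α (star s * e * s) := by
          rw [hα1, hvv', map_mul, map_mul, map_star, one_mul]
      _ = 1 := by rw [hse, map_one]
  refine ⟨star (α s) * v * s, ?_, hw2, fun b hb => ?_⟩
  · calc _ = star s * (star v * (α s * star (α s))) * v * s := by
          simp only [star_mul, star_star]; noncomm_ring
      _ = (star s * s) * star s * (star v * v) * s := by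
          rw [← map_star, ← map_mul, ← hvs _ hp]; noncomm_ring
      _ = 1 := by rw [hs, hvv, one_mul, hse]
  · have hwb : star (α s) * v * s * b = α b * (star (α s) * v * s) := by
      calc _ = star (α s) * v * s * b * (star s * s) := by rw [hs, mul_one]
        _ = star (α s) * (v * (s * b * star s)) * s := by noncomm_ring
        _ = (star (α s) * α s) * α b * (star (α s) * v * s) := by
          rw [hvb _ (hconj b hb), map_mul, map_mul, map_star]; noncomm_ring
        _ = _ := by rw [hα1, one_mul]
    rw [hwb, mul_assoc, hw2, mul_one]
end
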